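/- arXiv:1805.08491 — 3 statements merged into one kernel-verified Lean document; each statement's English description precedes it below -/
import Mathlib

section
/- Let 𝔤 be an n-dimensional real nilpotent Lie algebra with a nice basis, structure constants c = (c_I), and square root matrix M_Δ (so |I_Δ| = n) whose mod-2 reduction M_{Δ,2} is invertible over ℤ/2. Let X = (M_Δᵀ)⁻¹(1,…,1) (M_Δ is invertible over ℝ since its determinant is odd). Then the structure constants c' given by c'_I = c_I when x_I ≠ 0 and c'_I = 0 otherwise define a nilpotent Lie algebra that is either 𝔤 itself (when all x_I ≠ 0) or a contraction limit of 𝔤, and this Lie algebra admits a diagonal metric satisfying condition (E) (ric = ½ id); moreover it is the unique contraction limit of 𝔤 with this property. -/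
/-! The determinant of the square root matrix `M` is odd because `M` is injective mod 2; so `M` is
invertible over `ℝ`, the solution `X` of `Mᵀ X = (1, …, 1)` exists and is unique, and every real
system `M v = y` is solvable.

* For a diagonal metric `g` the niceness conditions make the Ricci operator diagonal, with diagonal
  `½ Mᵀ Y`, where `Y_I = g_k / (g_i g_j) c_I²` (`einsteinE_diagonal_iff`). Hence (E) holds exactly
  when `Y = X`. In particular (E) determines which structure constants vanish; this is uniqueness.
* Solving `Y = X` for `g` amounts to prescribing the absolute values of the products
  `g_k / (g_i g_j)` on the support of `X` (a linear system over `ℝ` for `log |g_i|`) and their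
  signs (a linear system over `ℤ/2` for the signs of the `g_i`). Both are solvable.
* If `M v = y` with `y_I = 0` where `x_I ≠ 0` and `y_I = -1` elsewhere, the rescalings of `c` by
  `d_i = exp (t v_i)` tend to `c'` as `t → ∞` (`mem_closure_of_weights`). The Jacobi identity and
  nilpotency of a fixed step are closed conditions invariant under rescaling, so `c'` inherits them
  (`isNiceNilpotent_of_mem_closure`). -/

open scoped BigOperators

/-- The bilinear bracket on `Fin n → ℝ` determined by structure constants `c`. -/
def bracket {n : ℕ} (c : Fin n → Fin n → Fin n → ℝ) (x y : Fin n → ℝ) : Fin n → ℝ :=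
  fun k => ∑ i, ∑ j, x i * y j * c i j k

/-- `c` is the family of structure constants of a nilpotent Lie algebra for which
the standard basis of `Fin n → ℝ` is a nice basis. -/
structure IsNiceNilpotent {n : ℕ} (c : Fin n → Fin n → Fin n → ℝ) : Prop where
  skew : ∀ i j k, c i j k = - c j i k
  jacobi : ∀ x y z : Fin n → ℝ,
    bracket c (bracket c x y) z + bracket c (bracket c y z) x + bracket c (bracket c z x) y = 0
  nilpotent : ∃ N : ℕ, ∀ (v : Fin N → Fin n → ℝ) (w : Fin n → ℝ),
    (List.ofFn v).foldr (bracket c) w = 0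
  nice_k : ∀ i j k k', c i j k ≠ 0 → c i j k' ≠ 0 → k = k'
  nice_j : ∀ i j j' k, c i j k ≠ 0 → c i j' k ≠ 0 → j = j'

/-- Entry `h` of the row of the root matrix indexed by a bracket `[e i, e j] = c i j k • e k`:
the row vector `- eⁱ - eʲ + eᵏ`. -/
def rootRow {n : ℕ} (i j k h : Fin n) : ℤ :=
  (if k = h then 1 else 0) - (if i = h then 1 else 0) - (if j = h then 1 else 0)

/-- The mod 2 reduction of the root matrix entries. -/
def rootRow2 {n : ℕ} (i j k h : Fin n) : ZMod 2 := ((rootRow i j k h : ℤ) : ZMod 2)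

/-- The Ricci operator of the scalar product with matrix `g` in the nice basis,
`ric_h^k = ¼ g^{im} g^{lp} g_{hq} c_{ilk} c_{mpq} − ½ g^{km} g^{jp} g_{iq} c_{hji} c_{mpq}`. -/
noncomputable def Ric {n : ℕ} (c : Fin n → Fin n → Fin n → ℝ)
    (g : Matrix (Fin n) (Fin n) ℝ) : Matrix (Fin n) (Fin n) ℝ :=
  Matrix.of fun h k =>
    (1/4 : ℝ) * (∑ i, ∑ m, ∑ l, ∑ p, ∑ q,
        g⁻¹ i m * g⁻¹ l p * g h q * c i l k * c m p q)
    - (1/2 : ℝ) * (∑ m, ∑ j, ∑ p, ∑ i, ∑ q,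
        g⁻¹ k m * g⁻¹ j p * g i q * c h j i * c m p q)

/-- Condition (E): the Ricci operator equals `½ id`. -/
def EinsteinE {n : ℕ} (c : Fin n → Fin n → Fin n → ℝ)
    (g : Matrix (Fin n) (Fin n) ℝ) : Prop :=
  Ric c g = (1/2 : ℝ) • (1 : Matrix (Fin n) (Fin n) ℝ)

/-- The matrix of the `σ`-diagonal bilinear form `∑ᵢ gᵢ eⁱ ⊗ e^{σ i}`. -/
def sigmaDiag {n : ℕ} (σ : Equiv.Perm (Fin n)) (gv : Fin n → ℝ) :
    Matrix (Fin n) (Fin n) ℝ :=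
  Matrix.of fun i j => if σ i = j then gv i else 0

/-- `σ` is a diagram involution: it squares to the identity and preserves the
set of nonzero structure constants. -/
def IsDiagramInvolution {n : ℕ} (c : Fin n → Fin n → Fin n → ℝ)
    (σ : Equiv.Perm (Fin n)) : Prop :=
  (∀ i, σ (σ i) = i) ∧ ∀ i j k, c i j k ≠ 0 → c (σ i) (σ j) (σ k) ≠ 0

/-- The mod 2 root matrix `M_{Δ,2}` is surjective: every vector indexed by the brackets
`I_Δ` is of the form `M_{Δ,2} s`. -/
def SurjectiveType {n : ℕ} (c : Fin n → Fin n → Fin n → ℝ) : Prop :=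
  ∀ y : Fin n → Fin n → Fin n → ZMod 2, ∃ s : Fin n → ZMod 2,
    ∀ i j k, i < j → c i j k ≠ 0 → y i j k = ∑ h, rootRow2 i j k h * s h

/-! ### The root matrix -/

lemma sum_rootRow_mul {n : ℕ} (i j k : Fin n) (v : Fin n → ℝ) :
    ∑ h, ((rootRow i j k h : ℤ) : ℝ) * v h = v k - v i - v j := by
  simp [rootRow, sub_mul, Finset.sum_sub_distrib]

lemma sum_rootRow2_mul {n : ℕ} (i j k : Fin n) (v : Fin n → ZMod 2) :
    ∑ h, rootRow2 i j k h * v h = v k - v i - v j := by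
  simp [rootRow2, rootRow, sub_mul, Finset.sum_sub_distrib]

/-- The index set `I_Δ`: a bracket is recorded by its ordered triple `(i, j, k)` with `i < j`. -/
abbrev BracketIdx {n : ℕ} (c : Fin n → Fin n → Fin n → ℝ) : Type :=
  {t : Fin n × Fin n × Fin n // t.1 < t.2.1 ∧ c t.1 t.2.1 t.2.2 ≠ 0}

lemma exists_bracketIdx_equiv {n : ℕ} (c : Fin n → Fin n → Fin n → ℝ)
    (hcard : {t : Fin n × Fin n × Fin n |
        t.1 < t.2.1 ∧ c t.1 t.2.1 t.2.2 ≠ 0}.ncard = n) :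
    Nonempty (BracketIdx c ≃ Fin n) := by
  classical
  have h : Nat.card (BracketIdx c) = n := by
    exact hcard
  exact ⟨Finite.equivFinOfCardEq h⟩

/-- The root matrix, made square by an enumeration `e` of the brackets. -/
def rootMat {n : ℕ} {c : Fin n → Fin n → Fin n → ℝ} (e : BracketIdx c ≃ Fin n) :
    Matrix (Fin n) (Fin n) ℤ :=
  Matrix.of fun a h => rootRow (e.symm a).1.1 (e.symm a).1.2.1 (e.symm a).1.2.2 h

lemma isUnit_det_rootMat {n : ℕ} {c : Fin n → Fin n → Fin n → ℝ} (e : BracketIdx c ≃ Fin n)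
    (hinj : ∀ s : Fin n → ZMod 2,
      (∀ i j k : Fin n, i < j → c i j k ≠ 0 → (∑ h, rootRow2 i j k h * s h) = 0) → s = 0) :
    IsUnit ((rootMat e).map (Int.castRingHom ℝ)).det := by
  have h2 : ((rootMat e).map (Int.castRingHom (ZMod 2))).det ≠ 0 := by
    intro h
    obtain ⟨s, hs, h0⟩ := Matrix.exists_mulVec_eq_zero_iff.2 h
    apply hs
    apply hinj
    intro i j k hij hck
    have := congrFun h0 (e ⟨(i, j, k), hij, hck⟩)
    simpa [Matrix.mulVec, dotProduct, rootMat, rootRow2] using this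
  have hZ : (rootMat e).det ≠ 0 := by
    intro h
    apply h2
    have := RingHom.map_det (Int.castRingHom (ZMod 2)) (rootMat e)
    rw [h, map_zero] at this
    exact this.symm
  have := RingHom.map_det (Int.castRingHom ℝ) (rootMat e)
  rw [isUnit_iff_ne_zero]
  intro h
  apply hZ
  have h3 : (Int.castRingHom ℝ) (rootMat e).det = 0 := by rw [this]; exact h
  simpa using h3

/-- Real linear systems `M v = y` are solvable, the rows being written out. -/
lemma exists_log_solution {n : ℕ} {c : Fin n → Fin n → Fin n → ℝ} (e : BracketIdx c ≃ Fin n)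
    (hdet : IsUnit ((rootMat e).map (Int.castRingHom ℝ)).det)
    (y : Fin n → Fin n → Fin n → ℝ) :
    ∃ v : Fin n → ℝ, ∀ i j k, i < j → c i j k ≠ 0 → v k - v i - v j = y i j k := by
  set B := (rootMat e).map (Int.castRingHom ℝ) with hB
  let w : Fin n → ℝ := fun a => y (e.symm a).1.1 (e.symm a).1.2.1 (e.symm a).1.2.2
  refine ⟨B⁻¹.mulVec w, fun i j k hij hck => ?_⟩
  have h : B.mulVec (B⁻¹.mulVec w) = w := by
    rw [Matrix.mulVec_mulVec, Matrix.mul_nonsing_inv _ hdet, Matrix.one_mulVec]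
  have h1 := congrFun h (e ⟨(i, j, k), hij, hck⟩)
  generalize B⁻¹.mulVec w = v at h1 ⊢
  rw [← sum_rootRow_mul]
  simpa [Matrix.mulVec, dotProduct, hB, rootMat, w] using h1

lemma sum_eq_sum_bracketIdx {n : ℕ} {c : Fin n → Fin n → Fin n → ℝ} (e : BracketIdx c ≃ Fin n)
    (f : Fin n → Fin n → Fin n → ℝ)
    (hf : ∀ i j k : Fin n, ¬(i < j ∧ c i j k ≠ 0) → f i j k = 0) :
    ∑ i, ∑ j, ∑ k, f i j k
      = ∑ a, f (e.symm a).1.1 (e.symm a).1.2.1 (e.symm a).1.2.2 := by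
  classical
  rw [Equiv.sum_comp e.symm (fun t : BracketIdx c => f t.1.1 t.1.2.1 t.1.2.2)]
  simp_rw [← Fintype.sum_prod_type']
  rw [← Finset.sum_subtype (Finset.univ.filter fun t : Fin n × Fin n × Fin n =>
      t.1 < t.2.1 ∧ c t.1 t.2.1 t.2.2 ≠ 0) (by simp) (fun t => f t.1 t.2.1 t.2.2)]
  refine (Finset.sum_filter_of_ne fun t _ ht => ?_).symm
  by_contra hn
  exact ht (hf _ _ _ hn)

/-- Existence and uniqueness of the solution of `Mᵀ X = (1, …, 1)`. -/
lemma exists_unique_transpose_solution {n : ℕ} {c : Fin n → Fin n → Fin n → ℝ}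
    (e : BracketIdx c ≃ Fin n)
    (hdet : IsUnit ((rootMat e).map (Int.castRingHom ℝ)).det) :
    ∃ X : Fin n → Fin n → Fin n → ℝ,
      (∀ i j k : Fin n, ¬(i < j ∧ c i j k ≠ 0) → X i j k = 0) ∧
      (∀ h : Fin n, (∑ i, ∑ j, ∑ k, X i j k * ((rootRow i j k h : ℤ) : ℝ)) = 1) ∧
      (∀ X' : Fin n → Fin n → Fin n → ℝ,
        (∀ i j k : Fin n, ¬(i < j ∧ c i j k ≠ 0) → X' i j k = 0) →
        (∀ h : Fin n, (∑ i, ∑ j, ∑ k, X' i j k * ((rootRow i j k h : ℤ) : ℝ)) = 1) →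
        X' = X) := by
  classical
  set B := (rootMat e).map (Int.castRingHom ℝ) with hB
  have key : ∀ Z : Fin n → Fin n → Fin n → ℝ,
      (∀ i j k : Fin n, ¬(i < j ∧ c i j k ≠ 0) → Z i j k = 0) → ∀ h,
      (∑ i, ∑ j, ∑ k, Z i j k * ((rootRow i j k h : ℤ) : ℝ)) =
      Matrix.vecMul (fun a => Z (e.symm a).1.1 (e.symm a).1.2.1 (e.symm a).1.2.2) B h := by
    intro Z hZ h
    rw [sum_eq_sum_bracketIdx e]
    · simp [Matrix.vecMul, dotProduct, hB, rootMat]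
    · intro i j k hn
      rw [hZ i j k hn, zero_mul]
  let x : Fin n → ℝ := Matrix.vecMul (fun _ => 1) B⁻¹
  let X : Fin n → Fin n → Fin n → ℝ := fun i j k =>
    if h : i < j ∧ c i j k ≠ 0 then x (e ⟨(i, j, k), h⟩) else 0
  have hX0 : ∀ i j k : Fin n, ¬(i < j ∧ c i j k ≠ 0) → X i j k = 0 := by
    intro i j k hn
    exact dif_neg hn
  have hXx : (fun a => X (e.symm a).1.1 (e.symm a).1.2.1 (e.symm a).1.2.2) = x := by
    funext a
    have : X (e.symm a).1.1 (e.symm a).1.2.1 (e.symm a).1.2.2 = x (e (e.symm a)) :=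
      dif_pos (e.symm a).2
    rw [this, Equiv.apply_symm_apply]
  have hx1 : Matrix.vecMul x B = fun _ => 1 := by
    rw [Matrix.vecMul_vecMul, Matrix.nonsing_inv_mul _ hdet, Matrix.vecMul_one]
  refine ⟨X, hX0, fun h => ?_, fun X' hX' h1 => ?_⟩
  · rw [key X hX0, hXx, hx1]
  · have h2 : Matrix.vecMul
        (fun a => X' (e.symm a).1.1 (e.symm a).1.2.1 (e.symm a).1.2.2) B = fun _ => 1 := by
      funext h
      rw [← key X' hX', h1]
    have h3 : (fun a => X' (e.symm a).1.1 (e.symm a).1.2.1 (e.symm a).1.2.2) = x := by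
      rw [← Matrix.vecMul_one (fun a => X' (e.symm a).1.1 (e.symm a).1.2.1 (e.symm a).1.2.2),
        ← Matrix.mul_nonsing_inv B hdet, ← Matrix.vecMul_vecMul, h2]
    funext i j k
    by_cases hn : i < j ∧ c i j k ≠ 0
    · have h4 := congrFun h3 (e ⟨(i, j, k), hn⟩)
      simp only [Equiv.symm_apply_apply] at h4
      have h5 : X i j k = x (e ⟨(i, j, k), hn⟩) := dif_pos hn
      rw [h4, h5]
    · rw [hX' i j k hn, hX0 i j k hn]

/-! ### The Ricci operator of a diagonal metric -/

lemma inv_diagonal_eq {n : ℕ} {gv : Fin n → ℝ} (hg : ∀ i, gv i ≠ 0) :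
    (Matrix.diagonal gv)⁻¹ = Matrix.diagonal (fun i => (gv i)⁻¹) := by
  apply Matrix.inv_eq_right_inv
  rw [Matrix.diagonal_mul_diagonal, ← Matrix.diagonal_one]
  congr 1
  funext i
  exact mul_inv_cancel₀ (hg i)

lemma ric_diagonal_apply {n : ℕ} (c : Fin n → Fin n → Fin n → ℝ) {gv : Fin n → ℝ}
    (hg : ∀ i, gv i ≠ 0) (h k : Fin n) :
    Ric c (Matrix.diagonal gv) h k =
      (1/4 : ℝ) * (∑ i, ∑ l, (gv i)⁻¹ * (gv l)⁻¹ * gv h * c i l k * c i l h)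
      - (1/2 : ℝ) * (∑ j, ∑ i, (gv k)⁻¹ * (gv j)⁻¹ * gv i * c h j i * c k j i) := by
  rw [Ric, inv_diagonal_eq hg]
  simp [Matrix.diagonal_apply, Finset.sum_ite_eq, ite_mul, mul_ite]

/-- The numbers `Y_I = g_k / (g_i g_j) c_I²`, extended by zero to triples without `i < j`. -/
noncomputable def ricWeight {n : ℕ} (c : Fin n → Fin n → Fin n → ℝ) (gv : Fin n → ℝ)
    (i j k : Fin n) : ℝ :=
  if i < j then gv k / (gv i * gv j) * c i j k ^ 2 else 0

/-- The symmetric expression `Y_{ij}^k` is recovered from its truncation to `i < j`; skew-symmetry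
kills the diagonal terms `i = j`. -/
lemma ricWeight_add {n : ℕ} {c : Fin n → Fin n → Fin n → ℝ}
    (hskew : ∀ i j k, c i j k = - c j i k) (gv : Fin n → ℝ) (i j k : Fin n) :
    gv k / (gv i * gv j) * c i j k ^ 2 = ricWeight c gv i j k + ricWeight c gv j i k := by
  unfold ricWeight
  rcases lt_trichotomy i j with h | h | h
  · simp [h, h.not_gt]
  · subst h
    have : c i i k = 0 := by linarith [hskew i i k]
    simp [this]
  · rw [if_neg h.not_gt, if_pos h, hskew i j k]
    ring

lemma sum_mul_rootRow {n : ℕ} (W : Fin n → Fin n → Fin n → ℝ) (h : Fin n) :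
    ∑ i, ∑ j, ∑ k, W i j k * ((rootRow i j k h : ℤ) : ℝ) =
      (∑ i, ∑ j, W i j h) - (∑ j, ∑ k, W h j k) - (∑ i, ∑ k, W i h k) := by
  have : ∀ i j k, W i j k * ((rootRow i j k h : ℤ) : ℝ) =
      (if k = h then W i j k else 0) - (if i = h then W i j k else 0)
        - (if j = h then W i j k else 0) := by
    intro i j k
    unfold rootRow
    push_cast
    split_ifs <;> ring
  simp_rw [this, Finset.sum_sub_distrib]
  congr 1
  · congr 1
    · simp
    · rw [Finset.sum_eq_single h] <;> simp +contextual
  · refine Finset.sum_congr rfl fun i _ => ?_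
    rw [Finset.sum_eq_single h] <;> simp +contextual

/-- A diagonal metric satisfies (E) if and only if its weights `Y` solve `Mᵀ Y = (1, …, 1)`. -/
lemma einsteinE_diagonal_iff {n : ℕ} {c : Fin n → Fin n → Fin n → ℝ}
    (hskew : ∀ i j k, c i j k = - c j i k)
    (hk : ∀ i j k k', c i j k ≠ 0 → c i j k' ≠ 0 → k = k')
    (hj : ∀ i j j' k, c i j k ≠ 0 → c i j' k ≠ 0 → j = j')
    {gv : Fin n → ℝ} (hg : ∀ i, gv i ≠ 0) :
    EinsteinE c (Matrix.diagonal gv) ↔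
      ∀ h, ∑ i, ∑ j, ∑ k, ricWeight c gv i j k * ((rootRow i j k h : ℤ) : ℝ) = 1 := by
  have hoff : ∀ h k, h ≠ k → Ric c (Matrix.diagonal gv) h k = 0 := by
    intro h k hne
    have e1 : ∀ i l, c i l k * c i l h = 0 := by
      intro i l
      by_contra hh
      exact hne (hk i l h k (right_ne_zero_of_mul hh) (left_ne_zero_of_mul hh))
    have e2 : ∀ j i, c h j i * c k j i = 0 := by
      intro j i
      rw [hskew h, hskew k]
      by_contra hh
      exact hne (hj j h k i (neg_ne_zero.1 (left_ne_zero_of_mul hh))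
        (neg_ne_zero.1 (right_ne_zero_of_mul hh)))
    rw [ric_diagonal_apply c hg]
    simp [mul_assoc, e1, e2]
  have hdiag : ∀ h, Ric c (Matrix.diagonal gv) h h = (1/2 : ℝ) *
      ∑ i, ∑ j, ∑ k, ricWeight c gv i j k * ((rootRow i j k h : ℤ) : ℝ) := by
    intro h
    rw [ric_diagonal_apply c hg, sum_mul_rootRow]
    have e1 : ∑ i, ∑ l, (gv i)⁻¹ * (gv l)⁻¹ * gv h * c i l h * c i l h =
        2 * ∑ i, ∑ j, ricWeight c gv i j h := by
      have : ∀ i l, (gv i)⁻¹ * (gv l)⁻¹ * gv h * c i l h * c i l h =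
          ricWeight c gv i l h + ricWeight c gv l i h := by
        intro i l
        rw [← ricWeight_add hskew, div_eq_mul_inv, mul_inv]
        ring
      simp_rw [this, Finset.sum_add_distrib]
      rw [Finset.sum_comm (f := fun x y => ricWeight c gv y x h)]
      ring
    have e2 : ∑ j, ∑ i, (gv h)⁻¹ * (gv j)⁻¹ * gv i * c h j i * c h j i =
        (∑ j, ∑ k, ricWeight c gv h j k) + ∑ i, ∑ k, ricWeight c gv i h k := by
      have : ∀ j i, (gv h)⁻¹ * (gv j)⁻¹ * gv i * c h j i * c h j i =
          ricWeight c gv h j i + ricWeight c gv j h i := by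
        intro j i
        rw [← ricWeight_add hskew, div_eq_mul_inv, mul_inv]
        ring
      simp_rw [this, Finset.sum_add_distrib]
    rw [e1, e2]
    ring
  unfold EinsteinE
  constructor
  · intro hE h
    have := congrFun (congrFun hE h) h
    rw [hdiag] at this
    simp only [Matrix.smul_apply, Matrix.one_apply_eq, smul_eq_mul] at this
    linarith
  · intro hE
    ext h k
    by_cases hne : h = k
    · subst hne
      rw [hdiag, hE]
      simp
    · rw [hoff h k hne]
      simp [hne]

/-! ### Signs -/

/-- The sign character `ℤ/2 → {±1}`, with real values. -/
def sgn2 (a : ZMod 2) : ℝ := if a = 0 then 1 else -1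

lemma sgn2_ne_zero (a : ZMod 2) : sgn2 a ≠ 0 := by
  unfold sgn2; split_ifs <;> norm_num

lemma sgn2_sub_sub (a b d : ZMod 2) : sgn2 (a - b - d) = sgn2 a / (sgn2 b * sgn2 d) := by
  have h01 : ∀ z : ZMod 2, z = 0 ∨ z = 1 := by decide
  have h10 : (0 : ZMod 2) - 1 = 1 := by decide
  unfold sgn2
  rcases h01 a with rfl | rfl <;> rcases h01 b with rfl | rfl <;>
    rcases h01 d with rfl | rfl <;> simp [h10]

/-! ### Rescalings and their limits -/

lemma bracket_rescale {n : ℕ} {c cc : Fin n → Fin n → Fin n → ℝ} {d : Fin n → ℝ}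
    (hd : ∀ i, d i ≠ 0) (h : ∀ i j k : Fin n, cc i j k = d k / (d i * d j) * c i j k)
    (x y : Fin n → ℝ) : bracket cc (d * x) (d * y) = d * bracket c x y := by
  funext k
  simp only [bracket, Pi.mul_apply, Finset.mul_sum]
  refine Finset.sum_congr rfl fun i _ => Finset.sum_congr rfl fun j _ => ?_
  rw [h]
  have := hd i
  have := hd j
  field_simp

lemma foldr_rescale {n : ℕ} {c cc : Fin n → Fin n → Fin n → ℝ} {d : Fin n → ℝ}
    (hd : ∀ i, d i ≠ 0) (h : ∀ i j k : Fin n, cc i j k = d k / (d i * d j) * c i j k)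
    (l : List (Fin n → ℝ)) (w : Fin n → ℝ) :
    (l.map (d * ·)).foldr (bracket cc) (d * w) = d * l.foldr (bracket c) w := by
  induction l with
  | nil => rfl
  | cons a l ih => simp [ih, bracket_rescale hd h]

lemma continuous_bracket {n : ℕ} {Z : Type*} [TopologicalSpace Z]
    {C : Z → Fin n → Fin n → Fin n → ℝ} {x y : Z → Fin n → ℝ} (hC : Continuous C)
    (hx : Continuous x) (hy : Continuous y) : Continuous fun z => bracket (C z) (x z) (y z) := by
  unfold bracket
  fun_prop

lemma continuous_foldr_bracket {n : ℕ} (l : List (Fin n → ℝ)) (w : Fin n → ℝ) :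
    Continuous fun c : Fin n → Fin n → Fin n → ℝ => l.foldr (bracket c) w := by
  induction l with
  | nil => exact continuous_const
  | cons a l ih => exact continuous_bracket continuous_id continuous_const ih

/-- The orbit of `c` under diagonal rescalings. -/
def diagOrbit {n : ℕ} (c : Fin n → Fin n → Fin n → ℝ) : Set (Fin n → Fin n → Fin n → ℝ) :=
  {cc | ∃ d : Fin n → ℝ, (∀ i, d i ≠ 0) ∧
    ∀ i j k : Fin n, cc i j k = d k / (d i * d j) * c i j k}

lemma skew_of_mem_closure {n : ℕ} {c cc : Fin n → Fin n → Fin n → ℝ}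
    (hskew : ∀ i j k, c i j k = - c j i k) (h : cc ∈ closure (diagOrbit c)) :
    ∀ i j k, cc i j k = - cc j i k := by
  intro i j k
  have hcl : IsClosed {a : Fin n → Fin n → Fin n → ℝ | a i j k = - a j i k} :=
    isClosed_eq (by fun_prop) (by fun_prop)
  refine closure_minimal ?_ hcl h
  rintro a ⟨d, hd, ha⟩
  simp only [Set.mem_ofPred_eq]
  rw [ha, ha, hskew i j k, mul_comm (d i)]
  ring

lemma jacobi_of_mem_closure {n : ℕ} {c cc : Fin n → Fin n → Fin n → ℝ}
    (hc : IsNiceNilpotent c) (h : cc ∈ closure (diagOrbit c)) (x y z : Fin n → ℝ) :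
    bracket cc (bracket cc x y) z + bracket cc (bracket cc y z) x
      + bracket cc (bracket cc z x) y = 0 := by
  have hb : ∀ x y z : Fin n → ℝ, Continuous fun a : Fin n → Fin n → Fin n → ℝ =>
      bracket a (bracket a x y) z := fun x y z =>
    continuous_bracket continuous_id
      (continuous_bracket continuous_id continuous_const continuous_const) continuous_const
  have hcl : IsClosed {a : Fin n → Fin n → Fin n → ℝ |
      bracket a (bracket a x y) z + bracket a (bracket a y z) x
        + bracket a (bracket a z x) y = 0} :=
    isClosed_eq (((hb x y z).add (hb y z x)).add (hb z x y)) continuous_const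
  refine closure_minimal ?_ hcl h
  rintro a ⟨d, hd, ha⟩
  have hdd : ∀ u : Fin n → ℝ, ∃ u', u = d * u' := fun u =>
    ⟨fun i => u i / d i, by funext i; simp [mul_div_cancel₀, hd i]⟩
  obtain ⟨x, rfl⟩ := hdd x
  obtain ⟨y, rfl⟩ := hdd y
  obtain ⟨z, rfl⟩ := hdd z
  simp only [Set.mem_ofPred_eq, bracket_rescale hd ha]
  rw [← mul_add, ← mul_add, hc.jacobi, mul_zero]

lemma nilpotent_of_mem_closure {n : ℕ} {c cc : Fin n → Fin n → Fin n → ℝ}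
    (hc : IsNiceNilpotent c) (h : cc ∈ closure (diagOrbit c)) :
    ∃ N : ℕ, ∀ (v : Fin N → Fin n → ℝ) (w : Fin n → ℝ),
      (List.ofFn v).foldr (bracket cc) w = 0 := by
  obtain ⟨N, hN⟩ := hc.nilpotent
  refine ⟨N, fun v w => ?_⟩
  have hcl : IsClosed {a : Fin n → Fin n → Fin n → ℝ |
      (List.ofFn v).foldr (bracket a) w = 0} :=
    isClosed_eq (continuous_foldr_bracket _ _) continuous_const
  refine closure_minimal ?_ hcl h
  rintro a ⟨d, hd, ha⟩
  have hdd : ∀ u : Fin n → ℝ, d * (fun i => u i / d i) = u := fun u => by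
    funext i; simp [mul_div_cancel₀, hd i]
  have h1 := foldr_rescale hd ha (List.ofFn fun a i => v a i / d i) (fun i => w i / d i)
  rw [hN, mul_zero, List.map_ofFn, hdd] at h1
  have h2 : ((d * ·) ∘ fun a i => v a i / d i) = v := by
    funext a
    exact hdd (v a)
  rw [h2] at h1
  exact h1

lemma isNiceNilpotent_of_mem_closure {n : ℕ} {c cc : Fin n → Fin n → Fin n → ℝ}
    (hc : IsNiceNilpotent c) (hsub : ∀ i j k, cc i j k ≠ 0 → c i j k ≠ 0)
    (h : cc ∈ closure (diagOrbit c)) : IsNiceNilpotent cc where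
  skew := skew_of_mem_closure hc.skew h
  jacobi := jacobi_of_mem_closure hc h
  nilpotent := nilpotent_of_mem_closure hc h
  nice_k := fun i j k k' h1 h2 => hc.nice_k i j k k' (hsub _ _ _ h1) (hsub _ _ _ h2)
  nice_j := fun i j j' k h1 h2 => hc.nice_j i j j' k (hsub _ _ _ h1) (hsub _ _ _ h2)

/-- If `v` has weight `0` on the brackets kept in `c'` and `-1` on the deleted ones, the rescalings
by `exp (t v)` tend to `c'` as `t → ∞`. -/
lemma mem_closure_of_weights {n : ℕ} {c c' : Fin n → Fin n → Fin n → ℝ} (v : Fin n → ℝ)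
    (h : ∀ i j k, (c' i j k = c i j k ∧ (c i j k ≠ 0 → v k - v i - v j = 0)) ∨
      (c' i j k = 0 ∧ (c i j k ≠ 0 → v k - v i - v j = -1))) :
    c' ∈ closure (diagOrbit c) := by
  have hlim : Filter.Tendsto (fun (t : ℝ) (i j k : Fin n) =>
      Real.exp (t * (v k - v i - v j)) * c i j k) Filter.atTop (nhds c') := by
    simp only [tendsto_pi_nhds]
    intro i j k
    by_cases h0 : c i j k = 0
    · have : c' i j k = 0 := by
        rcases h i j k with h1 | h1
        · rw [h1.1, h0]
        · exact h1.1
      simp [h0, this]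
    · rcases h i j k with ⟨h1, h2⟩ | ⟨h1, h2⟩
      · rw [h2 h0, h1]
        simp
      · rw [h2 h0, h1]
        have : Filter.Tendsto (fun t : ℝ => Real.exp (t * -1)) Filter.atTop (nhds 0) := by
          simpa using Real.tendsto_exp_neg_atTop_nhds_zero
        simpa using this.mul_const (c i j k)
  refine mem_closure_of_tendsto hlim (Filter.Eventually.of_forall fun t => ?_)
  refine ⟨fun i => Real.exp (t * v i), fun i => (Real.exp_pos _).ne', fun i j k => ?_⟩
  rw [← Real.exp_add, ← Real.exp_sub]
  ring_nf

/-! ### The contraction limit -/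

/-- Invertible mod 2 root matrix: if the root matrix is square (`|I_Δ| = n`) and its mod 2
reduction is invertible (i.e. bijective as a linear map over `ℤ/2`), then the (unique)
solution `X` of `M_Δᵀ X = (1,…,1)` exists, and keeping exactly the brackets with
`x_I ≠ 0` yields either the Lie algebra itself (when all `x_I ≠ 0`) or a contraction
limit of it, and this nice nilpotent Lie algebra admits a diagonal metric satisfying
(E) `ric = ½ id`; moreover it is the unique contraction limit with this property. -/
theorem invertible_mod_two_contraction_limit
    (n : ℕ) (c : Fin n → Fin n → Fin n → ℝ) (hc : IsNiceNilpotent c)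
    (hcard : {t : Fin n × Fin n × Fin n |
        t.1 < t.2.1 ∧ c t.1 t.2.1 t.2.2 ≠ 0}.ncard = n)
    (hsurj : SurjectiveType c)
    (hinj : ∀ s : Fin n → ZMod 2,
      (∀ i j k : Fin n, i < j → c i j k ≠ 0 → (∑ h, rootRow2 i j k h * s h) = 0) → s = 0) :
    ∃ X : Fin n → Fin n → Fin n → ℝ,
      (∀ i j k : Fin n, ¬(i < j ∧ c i j k ≠ 0) → X i j k = 0) ∧
      (∀ h : Fin n, (∑ i, ∑ j, ∑ k, X i j k * ((rootRow i j k h : ℤ) : ℝ)) = 1) ∧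
      (∀ X' : Fin n → Fin n → Fin n → ℝ,
        (∀ i j k : Fin n, ¬(i < j ∧ c i j k ≠ 0) → X' i j k = 0) →
        (∀ h : Fin n, (∑ i, ∑ j, ∑ k, X' i j k * ((rootRow i j k h : ℤ) : ℝ)) = 1) →
        X' = X) ∧
      (∀ c' : Fin n → Fin n → Fin n → ℝ,
        (∀ i j k : Fin n,
          (X i j k ≠ 0 ∨ X j i k ≠ 0 → c' i j k = c i j k) ∧
          (X i j k = 0 ∧ X j i k = 0 → c' i j k = 0)) →
        IsNiceNilpotent c' ∧
        ((∀ i j k : Fin n, i < j → c i j k ≠ 0 → X i j k ≠ 0) → c' = c) ∧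
        c' ∈ closure {cc : Fin n → Fin n → Fin n → ℝ |
          ∃ d : Fin n → ℝ, (∀ i, d i ≠ 0) ∧
            ∀ i j k : Fin n, cc i j k = d k / (d i * d j) * c i j k} ∧
        (∃ gv : Fin n → ℝ, (∀ i, gv i ≠ 0) ∧ EinsteinE c' (Matrix.diagonal gv)) ∧
        (∀ cc : Fin n → Fin n → Fin n → ℝ,
          (∀ i j k : Fin n, cc i j k = c i j k ∨ cc i j k = 0) →
          cc ∈ closure {cd : Fin n → Fin n → Fin n → ℝ |
            ∃ d : Fin n → ℝ, (∀ i, d i ≠ 0) ∧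
              ∀ i j k : Fin n, cd i j k = d k / (d i * d j) * c i j k} →
          (∃ gv : Fin n → ℝ, (∀ i, gv i ≠ 0) ∧ EinsteinE cc (Matrix.diagonal gv)) →
          ∀ i j k : Fin n, i < j → c i j k ≠ 0 → (cc i j k ≠ 0 ↔ X i j k ≠ 0))) := by
  classical
  obtain ⟨e⟩ := exists_bracketIdx_equiv c hcard
  have hdet := isUnit_det_rootMat e hinj
  obtain ⟨X, hX0, hX1, hXu⟩ := exists_unique_transpose_solution e hdet
  refine ⟨X, hX0, hX1, hXu, fun c' hc' => ?_⟩
  have hXlt : ∀ i j k, X i j k ≠ 0 → i < j ∧ c i j k ≠ 0 := fun i j k h => by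
    by_contra hn
    exact h (hX0 i j k hn)
  have hsub : ∀ i j k, c' i j k ≠ 0 → c i j k ≠ 0 := by
    intro i j k h
    by_cases hx : X i j k = 0 ∧ X j i k = 0
    · exact absurd ((hc' i j k).2 hx) h
    · rwa [(hc' i j k).1 (by tauto)] at h
  have hXji : ∀ i j k, i < j → X j i k = 0 := fun i j k hij => by
    by_contra hn
    exact absurd (hXlt _ _ _ hn).1 hij.not_gt
  have hmem : c' ∈ closure (diagOrbit c) := by
    obtain ⟨v, hv⟩ := exists_log_solution e hdet (fun i j k => if X i j k = 0 then -1 else 0)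
    refine mem_closure_of_weights v fun i j k => ?_
    have hw : c i j k ≠ 0 → v k - v i - v j = if X i j k = 0 ∧ X j i k = 0 then -1 else 0 := by
      intro h0
      rcases lt_trichotomy i j with h | h | h
      · rw [hv i j k h h0]
        simp [hXji i j k h]
      · subst h
        exact absurd (by linarith [hc.skew i i k]) h0
      · have h0' : c j i k ≠ 0 := by
          rw [hc.skew j i k]
          exact neg_ne_zero.2 h0
        have := hv j i k h h0'
        simp only [hXji j i k h, true_and]
        linarith
    by_cases hx : X i j k = 0 ∧ X j i k = 0
    · exact Or.inr ⟨(hc' i j k).2 hx, fun h0 => by rw [hw h0, if_pos hx]⟩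
    · exact Or.inl ⟨(hc' i j k).1 (by tauto), fun h0 => by rw [hw h0, if_neg hx]⟩
  have hnice := isNiceNilpotent_of_mem_closure hc hsub hmem
  refine ⟨hnice, fun hall => ?_, hmem, ?_, ?_⟩
  · funext i j k
    by_cases hx : X i j k = 0 ∧ X j i k = 0
    · rw [(hc' i j k).2 hx]
      by_contra h0
      rcases lt_trichotomy i j with h | h | h
      · exact hall i j k h (Ne.symm h0) hx.1
      · subst h
        exact h0 (by linarith [hc.skew i i k])
      · refine hall j i k h ?_ hx.2
        rw [hc.skew j i k]
        exact neg_ne_zero.2 (Ne.symm h0)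
    · exact (hc' i j k).1 (by tauto)
  · obtain ⟨s, hs⟩ : ∃ s : Fin n → ZMod 2, ∀ i j k, i < j → c i j k ≠ 0 →
        (if X i j k < 0 then (1 : ZMod 2) else 0) = s k - s i - s j := by
      obtain ⟨s, hs⟩ := hsurj (fun i j k => if X i j k < 0 then 1 else 0)
      exact ⟨s, fun i j k h h0 => by rw [hs i j k h h0, sum_rootRow2_mul]⟩
    obtain ⟨v, hv⟩ := exists_log_solution e hdet
      (fun i j k => Real.log (|X i j k| / c i j k ^ 2))
    have hg : ∀ i, sgn2 (s i) * Real.exp (v i) ≠ 0 := fun i =>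
      mul_ne_zero (sgn2_ne_zero _) (Real.exp_pos _).ne'
    refine ⟨fun i => sgn2 (s i) * Real.exp (v i), hg, ?_⟩
    rw [einsteinE_diagonal_iff hnice.skew hnice.nice_k hnice.nice_j hg]
    have hW : ricWeight c' (fun i => sgn2 (s i) * Real.exp (v i)) = X := by
      funext i j k
      by_cases hx : X i j k = 0
      · by_cases hij : i < j
        · rw [ricWeight, if_pos hij, (hc' i j k).2 ⟨hx, hXji i j k hij⟩, hx]
          simp
        · rw [ricWeight, if_neg hij, hx]
      · obtain ⟨hij, h0⟩ := hXlt i j k hx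
        have h1 : sgn2 (s k) * Real.exp (v k) /
            (sgn2 (s i) * Real.exp (v i) * (sgn2 (s j) * Real.exp (v j))) =
            sgn2 (s k - s i - s j) * Real.exp (v k - v i - v j) := by
          rw [sgn2_sub_sub, Real.exp_sub, Real.exp_sub]
          have := sgn2_ne_zero (s i)
          have := sgn2_ne_zero (s j)
          field_simp
        have hpos : 0 < |X i j k| / c i j k ^ 2 := by positivity
        rw [ricWeight, if_pos hij, (hc' i j k).1 (Or.inl hx), h1, hv i j k hij h0,
          Real.exp_log hpos, ← hs i j k hij h0, mul_assoc,
          div_mul_cancel₀ _ (pow_ne_zero 2 h0)]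
        by_cases hneg : X i j k < 0
        · simp [sgn2, hneg, abs_of_neg hneg]
        · simp [sgn2, hneg, abs_of_nonneg (not_lt.1 hneg)]
    rw [hW]
    exact hX1
  · rintro cc hcc hccm ⟨gv, hg, hE⟩ i j k hij h0
    have hskew := skew_of_mem_closure hc.skew hccm
    have hsub' : ∀ i j k, cc i j k ≠ 0 → c i j k ≠ 0 := by
      intro i j k h
      rcases hcc i j k with h1 | h1
      · rwa [h1] at h
      · exact absurd h1 h
    rw [einsteinE_diagonal_iff hskew
      (fun i j k k' h1 h2 => hc.nice_k i j k k' (hsub' _ _ _ h1) (hsub' _ _ _ h2))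
      (fun i j j' k h1 h2 => hc.nice_j i j j' k (hsub' _ _ _ h1) (hsub' _ _ _ h2)) hg] at hE
    have hWX := hXu (ricWeight cc gv) (fun i j k hn => by
      unfold ricWeight
      split_ifs with h
      · have : cc i j k = 0 := by
          by_contra hne
          exact hn ⟨h, hsub' _ _ _ hne⟩
        simp [this]
      · rfl) hE
    rw [← hWX, ricWeight, if_pos hij]
    simp [hg i, hg j, hg k]
end

section
/- Let 𝔤 be the 8-dimensional real nilpotent Lie algebra with basis e₁,…,e₈ and nonzero brackets [e₁,e₂] = e₅, [e₃,e₄] = e₆, [e₁,e₅] = e₇, [e₂,e₄] = e₇, [e₃,e₆] = e₇, [e₁,e₃] = e₈, [e₂,e₅] = e₈, [e₄,e₆] = e₈ (the Lie algebra 842:117). Then the permutation σ = (1 4)(2 3)(5 6)(7 8) is a diagram involution, and the σ-diagonal symmetric bilinear form g with nonzero components g(e₁,e₄) = 7/15, g(e₂,e₃) = 7/15, g(e₅,e₆) = 49/45, g(e₇,e₈) = −343/225 (and the symmetric entries) is a nondegenerate metric of signature (4,4) satisfying condition (E): ric = ½ id. -/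
/-!
The bracket of `842:117` has the closed form `bracket_c842`, from which the Jacobi identity and
three-step nilpotency follow coordinatewise.

For the metric, `σ` is an involution preserving the coefficients `gᵢ`, so the inverse of the
`σ`-diagonal matrix is the `σ`-diagonal matrix with coefficients `gᵢ⁻¹`. This collapses the
fivefold sums in the Ricci operator to double sums (`ric_sigmaDiag`):
`ric_h^k = ¼ ∑ g_h / (g_i g_l) c_{ilk} c_{σi σl σh} − ½ ∑ g_i / (g_k g_j) c_{hji} c_{σk σj σi}`.
All data are rational, so the Einstein equation becomes a finite computation in `ℚ`. The
combinatorial conditions on the bracket diagram are likewise finite checks on integers.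

Each plane spanned by `e_i` and `e_{σ i}` is hyperbolic: with `a = g(e_i, e_{σ i})`, the vectors
`e_i ± (1 / 2a) e_{σ i}` are orthogonal of square `±1`, which gives signature `(4,4)`.
-/

open scoped BigOperators

/-- Upper-triangular part of the structure constants of the Lie algebra `842:117`:
`[e₁,e₂] = e₅`, `[e₃,e₄] = e₆`, `[e₁,e₅] = e₇`, `[e₂,e₄] = e₇`, `[e₃,e₆] = e₇`,
`[e₁,e₃] = e₈`, `[e₂,e₅] = e₈`, `[e₄,e₆] = e₈` (indices shifted: `e₁ = e 0`, …). -/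
def v842 : Fin 8 → Fin 8 → Fin 8 → ℝ := fun i j k =>
  if i = 0 ∧ j = 1 ∧ k = 4 then 1
  else if i = 2 ∧ j = 3 ∧ k = 5 then 1
  else if i = 0 ∧ j = 4 ∧ k = 6 then 1
  else if i = 1 ∧ j = 3 ∧ k = 6 then 1
  else if i = 2 ∧ j = 5 ∧ k = 6 then 1
  else if i = 0 ∧ j = 2 ∧ k = 7 then 1
  else if i = 1 ∧ j = 4 ∧ k = 7 then 1
  else if i = 3 ∧ j = 5 ∧ k = 7 then 1
  else 0

/-- The full (skew-symmetric) structure constants of `842:117`. -/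
def c842 : Fin 8 → Fin 8 → Fin 8 → ℝ := fun i j k => v842 i j k - v842 j i k

/-- The permutation `σ = (1 4)(2 3)(5 6)(7 8)` (in `Fin 8`: `(0 3)(1 2)(4 5)(6 7)`). -/
def sigma842 : Equiv.Perm (Fin 8) :=
  ⟨![3, 2, 1, 0, 5, 4, 7, 6], ![3, 2, 1, 0, 5, 4, 7, 6], by decide, by decide⟩

/-- The vector of components of the σ-diagonal metric `g(e₁,e₄) = g(e₂,e₃) = 7/15`,
`g(e₅,e₆) = 49/45`, `g(e₇,e₈) = −343/225`. -/
noncomputable def gv842 : Fin 8 → ℝ :=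
  ![7/15, 7/15, 7/15, 7/15, 49/45, 49/45, -343/225, -343/225]

/-- Integer-valued upper-triangular structure constants of `842:117`. -/
def v842Int (i j k : Fin 8) : ℤ :=
  if (i, j, k) ∈ ([(0, 1, 4), (2, 3, 5), (0, 4, 6), (1, 3, 6), (2, 5, 6), (0, 2, 7), (1, 4, 7),
    (3, 5, 7)] : List (Fin 8 × Fin 8 × Fin 8)) then 1 else 0

/-- Integer-valued structure constants of `842:117`, on which finite checks are decidable. -/
def c842Int (i j k : Fin 8) : ℤ := v842Int i j k - v842Int j i k

/-- The components of the metric as rational numbers. -/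
def gv842Rat : Fin 8 → ℚ :=
  ![7/15, 7/15, 7/15, 7/15, 49/45, 49/45, -343/225, -343/225]

lemma v842_eq_cast (i j k : Fin 8) : v842 i j k = (v842Int i j k : ℝ) := by
  simp only [v842, v842Int, List.mem_cons, Prod.mk.injEq, List.not_mem_nil, or_false,
    ite_or]
  split_ifs <;> simp

lemma c842_eq_cast (i j k : Fin 8) : c842 i j k = (c842Int i j k : ℝ) := by
  simp [c842, c842Int, v842_eq_cast]

lemma c842_ne_zero_iff (i j k : Fin 8) : c842 i j k ≠ 0 ↔ c842Int i j k ≠ 0 := by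
  rw [c842_eq_cast, Int.cast_ne_zero]

lemma gv842_eq_cast (i : Fin 8) : gv842 i = (gv842Rat i : ℝ) := by
  fin_cases i <;> simp [gv842, gv842Rat]

lemma bracket_c842 (x y : Fin 8 → ℝ) :
    bracket c842 x y = ![0, 0, 0, 0, x 0 * y 1 - x 1 * y 0, x 2 * y 3 - x 3 * y 2,
      x 0 * y 4 - x 4 * y 0 + (x 1 * y 3 - x 3 * y 1) + (x 2 * y 5 - x 5 * y 2),
      x 0 * y 2 - x 2 * y 0 + (x 1 * y 4 - x 4 * y 1) + (x 3 * y 5 - x 5 * y 3)] := by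
  ext k
  fin_cases k <;> simp [bracket, c842, v842, Fin.sum_univ_eight] <;> ring

lemma isNiceNilpotent_c842 : IsNiceNilpotent c842 where
  skew i j k := by simp [c842]
  jacobi x y z := by
    simp only [bracket_c842]
    ext k
    fin_cases k <;> simp <;> ring
  nilpotent := by
    refine ⟨3, fun v w => ?_⟩
    simp only [List.ofFn_succ, List.ofFn_zero, List.foldr_cons, List.foldr_nil, bracket_c842]
    ext k
    fin_cases k <;> simp
  nice_k := by
    simp only [c842_ne_zero_iff]
    decide +kernel
  nice_j := by
    simp only [c842_ne_zero_iff]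
    decide +kernel

lemma isDiagramInvolution_sigma842 : IsDiagramInvolution c842 sigma842 := by
  simp only [IsDiagramInvolution, c842_ne_zero_iff]
  decide +kernel

/-- The inverse of a `σ`-diagonal metric is `σ`-diagonal with inverted coefficients. -/
lemma inv_sigmaDiag {n : ℕ} {σ : Equiv.Perm (Fin n)} {gv : Fin n → ℝ} (hσ : ∀ i, σ (σ i) = i)
    (hgσ : ∀ i, gv (σ i) = gv i) (hg : ∀ i, gv i ≠ 0) :
    (sigmaDiag σ gv)⁻¹ = sigmaDiag σ fun i => (gv i)⁻¹ := by
  refine Matrix.inv_eq_left_inv ?_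
  ext i j
  simp only [sigmaDiag, Matrix.mul_apply, Matrix.of_apply, ite_mul, zero_mul, Finset.sum_ite_eq,
    Finset.mem_univ, if_true]
  simp [Matrix.one_apply, hσ, hgσ, hg]

/-- For a `σ`-diagonal metric each contraction against `g` or `g⁻¹` has a single nonzero term. -/
lemma ric_sigmaDiag {n : ℕ} (c : Fin n → Fin n → Fin n → ℝ) {σ : Equiv.Perm (Fin n)}
    {gv : Fin n → ℝ} (hσ : ∀ i, σ (σ i) = i) (hgσ : ∀ i, gv (σ i) = gv i) (hg : ∀ i, gv i ≠ 0)
    (h k : Fin n) :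
    Ric c (sigmaDiag σ gv) h k =
      (1/4) * ∑ i, ∑ l, (gv i)⁻¹ * (gv l)⁻¹ * gv h * c i l k * c (σ i) (σ l) (σ h)
      - (1/2) * ∑ j, ∑ i, (gv k)⁻¹ * (gv j)⁻¹ * gv i * c h j i * c (σ k) (σ j) (σ i) := by
  rw [Ric, inv_sigmaDiag hσ hgσ hg]
  simp only [sigmaDiag, Matrix.of_apply, ite_mul, mul_ite, zero_mul, mul_zero,
    Finset.sum_ite_eq, Finset.mem_univ, if_true, Finset.sum_ite_irrel, Finset.sum_const_zero]

/-- The Einstein equation for the collapsed Ricci operator, over `ℚ`. -/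
lemma ric842_rat : ∀ h k : Fin 8,
    (1/4) * ∑ i, ∑ l, (gv842Rat i)⁻¹ * (gv842Rat l)⁻¹ * gv842Rat h * (c842Int i l k : ℚ)
        * (c842Int (sigma842 i) (sigma842 l) (sigma842 h) : ℚ)
      - (1/2) * ∑ j, ∑ i, (gv842Rat k)⁻¹ * (gv842Rat j)⁻¹ * gv842Rat i * (c842Int h j i : ℚ)
        * (c842Int (sigma842 k) (sigma842 j) (sigma842 i) : ℚ)
      = if h = k then 1/2 else 0 := by
  decide +kernel

lemma gv842_sigma (i : Fin 8) : gv842 (sigma842 i) = gv842 i := by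
  simp only [gv842_eq_cast, Rat.cast_inj]
  revert i
  decide +kernel

lemma gv842_ne_zero (i : Fin 8) : gv842 i ≠ 0 := by
  fin_cases i <;> norm_num [gv842]

lemma einsteinE_842 : EinsteinE c842 (sigmaDiag sigma842 gv842) := by
  ext h k
  rw [ric_sigmaDiag c842 isDiagramInvolution_sigma842.1 gv842_sigma gv842_ne_zero]
  simp only [gv842_eq_cast, c842_eq_cast, Matrix.smul_apply, Matrix.one_apply, smul_eq_mul,
    mul_ite, mul_one, mul_zero]
  have hrat := congrArg (Rat.cast : ℚ → ℝ) (ric842_rat h k)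
  rw [apply_ite (Rat.cast : ℚ → ℝ)] at hrat
  push_cast at hrat
  exact hrat

/-- A `σ`-diagonal form with `σ`-invariant coefficients is symmetric. -/
lemma transpose_sigmaDiag {n : ℕ} {σ : Equiv.Perm (Fin n)} {gv : Fin n → ℝ}
    (hσ : ∀ i, σ (σ i) = i) (hgσ : ∀ i, gv (σ i) = gv i) :
    (sigmaDiag σ gv).transpose = sigmaDiag σ gv := by
  ext i j
  simp only [sigmaDiag, Matrix.transpose_apply, Matrix.of_apply]
  by_cases hij : σ i = j
  · subst hij
    simp [hσ, hgσ]
  · have hji : σ j ≠ i := fun hji => hij (by rw [← hji, hσ])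
    simp [hij, hji]

/-- A rational orthonormal frame. The columns are the vectors `e_i + (1 / 2a) e_{σ i}` followed by
`e_i - (1 / 2a) e_{σ i}`, where `i` runs over the representatives `0, 1, 4, 6` of the `σ`-orbits
and `a = g(e_i, e_{σ i})`. -/
def frame842Rat : Matrix (Fin 8) (Fin 8) ℚ :=
  !![1, 0, 0, 0, 1, 0, 0, 0;
     0, 1, 0, 0, 0, 1, 0, 0;
     0, 15/14, 0, 0, 0, -15/14, 0, 0;
     15/14, 0, 0, 0, -15/14, 0, 0, 0;
     0, 0, 1, 0, 0, 0, 1, 0;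
     0, 0, 45/98, 0, 0, 0, -45/98, 0;
     0, 0, 0, 1, 0, 0, 0, 1;
     0, 0, 0, -225/686, 0, 0, 0, 225/686]

lemma frame842Rat_gram : ∀ i j : Fin 8,
    ∑ k, frame842Rat k i * (gv842Rat k * frame842Rat (sigma842 k) j) =
      if i = j then (![1, 1, 1, 1, -1, -1, -1, -1] : Fin 8 → ℚ) i else 0 := by
  decide +kernel

/-- The real frame with entries `frame842Rat`. -/
noncomputable def frame842 : Matrix (Fin 8) (Fin 8) ℝ := frame842Rat.map Rat.cast

lemma sigmaDiag842_mul (P : Matrix (Fin 8) (Fin 8) ℝ) (i j : Fin 8) :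
    (sigmaDiag sigma842 gv842 * P) i j = gv842 i * P (sigma842 i) j := by
  simp [sigmaDiag, Matrix.mul_apply]

lemma frame842_orthonormal :
    frame842.transpose * sigmaDiag sigma842 gv842 * frame842 =
      Matrix.diagonal ![1, 1, 1, 1, -1, -1, -1, -1] := by
  ext i j
  rw [Matrix.mul_assoc, Matrix.mul_apply]
  simp only [sigmaDiag842_mul, Matrix.transpose_apply, frame842, Matrix.map_apply, gv842_eq_cast,
    Matrix.diagonal_apply]
  have hrat := congrArg (Rat.cast : ℚ → ℝ) (frame842Rat_gram i j)
  rw [apply_ite (Rat.cast : ℚ → ℝ)] at hrat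
  push_cast at hrat
  rw [hrat]
  congr 1
  fin_cases i <;> simp

/-- The frame is a basis because its Gram matrix is invertible. -/
lemma isUnit_frame842 : IsUnit frame842 := by
  have hdet := congrArg Matrix.det frame842_orthonormal
  rw [Matrix.det_mul, Matrix.det_diagonal] at hdet
  rw [Matrix.isUnit_iff_isUnit_det, isUnit_iff_ne_zero]
  intro h0
  simp [h0, Fin.prod_univ_eight] at hdet

/-- On the Lie algebra `842:117` the permutation `σ = (1 4)(2 3)(5 6)(7 8)` is a diagram
involution and the σ-diagonal form with `g(e₁,e₄) = g(e₂,e₃) = 7/15`, `g(e₅,e₆) = 49/45`,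
`g(e₇,e₈) = −343/225` is a nondegenerate symmetric metric of signature `(4,4)`
satisfying (E): `ric = ½ id`. -/
theorem einstein_842_117_sigma_diagonal :
    IsNiceNilpotent c842 ∧
    IsDiagramInvolution c842 sigma842 ∧
    (sigmaDiag sigma842 gv842).transpose = sigmaDiag sigma842 gv842 ∧
    (∃ P : Matrix (Fin 8) (Fin 8) ℝ, IsUnit P ∧
      P.transpose * sigmaDiag sigma842 gv842 * P =
        Matrix.diagonal ![1, 1, 1, 1, -1, -1, -1, -1]) ∧
    EinsteinE c842 (sigmaDiag sigma842 gv842) := by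
  exact ⟨isNiceNilpotent_c842, isDiagramInvolution_sigma842,
    transpose_sigmaDiag isDiagramInvolution_sigma842.1 gv842_sigma,
    ⟨frame842, isUnit_frame842, frame842_orthonormal⟩, einsteinE_842⟩
end

section
/- Let 𝔤 be the 9-dimensional real nilpotent Lie algebra with basis e₁,…,e₉ and nonzero brackets [e₁,e₂] = e₅, [e₃,e₄] = e₆, [e₁,e₃] = e₇, [e₂,e₄] = e₇, [e₁,e₅] = e₈, [e₂,e₃] = e₈, [e₁,e₄] = e₉, [e₃,e₆] = e₉ (the Lie algebra 952:355). Then the permutation σ = (1 3)(2 4)(5 6)(8 9) is a diagram involution, but 𝔤 admits no σ-diagonal metric satisfying condition (E) (ric = ½ id), even though 𝔤 does admit a diagonal metric satisfying (E): for every nonzero real g₂, the diagonal metric with ⟨eᵢ,eᵢ⟩ given by g₁ = 4/21, g₂, g₃ = 4/21, g₄ = −64/(1323 g₂), g₅ = −(8/7) g₂, g₆ = 512/(9261 g₂), g₇ = 64/441, g₈ = 32 g₂/21, g₉ = −2048/(27783 g₂) satisfies ric = ½ id. -/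
/-!
For an involution `σ` the inverse of a `σ`-diagonal metric is again `σ`-diagonal, so the two terms
of the Ricci operator collapse to double sums (`ric_sigmaDiag_apply`). If moreover `σ` is a diagram
involution of a nice basis, the nice conditions kill every off-diagonal entry
(`ric_sigmaDiag_offDiag`), so that (E) amounts to nine scalar equations.

For `952:355` with `σ = (1 3)(2 4)(5 6)(8 9)`, attach to each bracket `[eᵢ, eⱼ] = eₖ`
the quantity `± gₖ / (gᵢ gⱼ)`, its sign being that of `c_{σ(i)σ(j)σ(k)}`. The equations are linear
in these quantities and force `g₇ / g₁² = -4` and `g₇ / g₂² = 3`, whose product `-12` would be the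
square of `g₇ / (g₁ g₂)` (`not_einstein_sigmaDiag952`). The case `σ = id` of the same
reduction verifies the diagonal metrics.
-/

open scoped BigOperators

/-- Upper-triangular part of the structure constants of the Lie algebra `952:355`:
`[e₁,e₂] = e₅`, `[e₃,e₄] = e₆`, `[e₁,e₃] = e₇`, `[e₂,e₄] = e₇`, `[e₁,e₅] = e₈`,
`[e₂,e₃] = e₈`, `[e₁,e₄] = e₉`, `[e₃,e₆] = e₉` (indices shifted: `e₁ = e 0`, …). -/
def v952 : Fin 9 → Fin 9 → Fin 9 → ℝ := fun i j k =>
  if i = 0 ∧ j = 1 ∧ k = 4 then 1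
  else if i = 2 ∧ j = 3 ∧ k = 5 then 1
  else if i = 0 ∧ j = 2 ∧ k = 6 then 1
  else if i = 1 ∧ j = 3 ∧ k = 6 then 1
  else if i = 0 ∧ j = 4 ∧ k = 7 then 1
  else if i = 1 ∧ j = 2 ∧ k = 7 then 1
  else if i = 0 ∧ j = 3 ∧ k = 8 then 1
  else if i = 2 ∧ j = 5 ∧ k = 8 then 1
  else 0

/-- The full (skew-symmetric) structure constants of `952:355`. -/
def c952 : Fin 9 → Fin 9 → Fin 9 → ℝ := fun i j k => v952 i j k - v952 j i k

/-- The permutation `σ = (1 3)(2 4)(5 6)(8 9)` (in `Fin 9`: `(0 2)(1 3)(4 5)(7 8)`). -/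
def sigma952 : Equiv.Perm (Fin 9) :=
  ⟨![2, 3, 0, 1, 5, 4, 6, 8, 7], ![2, 3, 0, 1, 5, 4, 6, 8, 7], by decide, by decide⟩

/-- The family of diagonal Einstein metrics on `952:355`, parametrized by `g₂ = t ≠ 0`. -/
noncomputable def gv952 (t : ℝ) : Fin 9 → ℝ :=
  ![4/21, t, 4/21, -64/(1323*t), -(8/7)*t, 512/(9261*t), 64/441, 32*t/21,
    -2048/(27783*t)]

/-! ### The Ricci operator of a σ-diagonal metric -/

theorem sigmaDiag_inv {n : ℕ} (σ : Equiv.Perm (Fin n)) (hσ : ∀ i, σ (σ i) = i)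
    (gv : Fin n → ℝ) (h0 : ∀ i, gv i ≠ 0) (hg : ∀ i, gv (σ i) = gv i) :
    (sigmaDiag σ gv)⁻¹ = sigmaDiag σ (fun i => (gv i)⁻¹) := by
  apply Matrix.inv_eq_right_inv
  ext i j
  rw [Matrix.mul_apply, Finset.sum_eq_single (σ i)]
  · simp [sigmaDiag, hσ, hg, Matrix.one_apply, h0]
  · intro b _ hb
    simp [sigmaDiag, hb.symm]
  · simp

theorem diagonal_eq_sigmaDiag {n : ℕ} (gv : Fin n → ℝ) :
    Matrix.diagonal gv = sigmaDiag 1 gv := by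
  ext i j
  by_cases hij : i = j <;> simp [sigmaDiag, hij]

theorem ric_sigmaDiag_apply {n : ℕ} (c : Fin n → Fin n → Fin n → ℝ)
    (σ : Equiv.Perm (Fin n)) (hσ : ∀ i, σ (σ i) = i)
    (gv : Fin n → ℝ) (h0 : ∀ i, gv i ≠ 0) (hg : ∀ i, gv (σ i) = gv i) (h k : Fin n) :
    Ric c (sigmaDiag σ gv) h k =
      (1/4 : ℝ) * (∑ i, ∑ l, (gv i)⁻¹ * (gv l)⁻¹ * gv h * (c i l k * c (σ i) (σ l) (σ h)))
      - (1/2 : ℝ) * (∑ j, ∑ i, (gv k)⁻¹ * (gv j)⁻¹ * gv i * (c h j i * c (σ k) (σ j) (σ i))) := by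
  rw [Ric, Matrix.of_apply, sigmaDiag_inv σ hσ gv h0 hg]
  simp [sigmaDiag, mul_assoc]

/-- A `σ`-diagonal metric of a nice basis, `σ` a diagram involution, has diagonal Ricci operator:
applying `σ` to the second structure constant in each summand shows that a nonzero summand
yields two brackets forced to coincide by the nice conditions. -/
theorem ric_sigmaDiag_offDiag {n : ℕ} (c : Fin n → Fin n → Fin n → ℝ) (hc : IsNiceNilpotent c)
    (σ : Equiv.Perm (Fin n)) (hσ : IsDiagramInvolution c σ)
    (gv : Fin n → ℝ) (h0 : ∀ i, gv i ≠ 0) (hg : ∀ i, gv (σ i) = gv i) (h k : Fin n)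
    (hk : h ≠ k) : Ric c (sigmaDiag σ gv) h k = 0 := by
  have back : ∀ i j l, c (σ i) (σ j) (σ l) ≠ 0 → c i j l ≠ 0 := by
    intro i j l hne
    simpa [hσ.1] using hσ.2 _ _ _ hne
  have A : ∀ i l, c i l k * c (σ i) (σ l) (σ h) = 0 := by
    intro i l
    by_contra hne
    exact hk (hc.nice_k i l h k (back _ _ _ (right_ne_zero_of_mul hne))
      (left_ne_zero_of_mul hne))
  have B : ∀ j i, c h j i * c (σ k) (σ j) (σ i) = 0 := by
    intro j i
    by_contra hne
    have h1 := left_ne_zero_of_mul hne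
    have h2 := back _ _ _ (right_ne_zero_of_mul hne)
    rw [hc.skew, neg_ne_zero] at h1 h2
    exact hk (hc.nice_j j h k i h1 h2)
  rw [ric_sigmaDiag_apply c σ hσ.1 gv h0 hg]
  simp [A, B]

/-! ### The Lie algebra 952:355 -/

/-- The explicit bracket of `952:355`. -/
theorem bracket_c952 (x y : Fin 9 → ℝ) :
    bracket c952 x y = ![0, 0, 0, 0,
      x 0 * y 1 - x 1 * y 0,
      x 2 * y 3 - x 3 * y 2,
      (x 0 * y 2 - x 2 * y 0) + (x 1 * y 3 - x 3 * y 1),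
      (x 0 * y 4 - x 4 * y 0) + (x 1 * y 2 - x 2 * y 1),
      (x 0 * y 3 - x 3 * y 0) + (x 2 * y 5 - x 5 * y 2)] := by
  ext k
  fin_cases k <;> simp [bracket, c952, v952, Fin.sum_univ_succ] <;> ring

/-- The upper-triangular structure constants over `ℤ`, where conditions on their support are
decidable. -/
def vInt952 (i j k : Fin 9) : ℤ :=
  if i = 0 ∧ j = 1 ∧ k = 4 then 1
  else if i = 2 ∧ j = 3 ∧ k = 5 then 1
  else if i = 0 ∧ j = 2 ∧ k = 6 then 1
  else if i = 1 ∧ j = 3 ∧ k = 6 then 1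
  else if i = 0 ∧ j = 4 ∧ k = 7 then 1
  else if i = 1 ∧ j = 2 ∧ k = 7 then 1
  else if i = 0 ∧ j = 3 ∧ k = 8 then 1
  else if i = 2 ∧ j = 5 ∧ k = 8 then 1
  else 0

/-- The integer form of `c952`. -/
def cInt952 (i j k : Fin 9) : ℤ := vInt952 i j k - vInt952 j i k

theorem c952_eq_cast (i j k : Fin 9) : c952 i j k = (cInt952 i j k : ℝ) := by
  have hv : ∀ i j k, v952 i j k = (vInt952 i j k : ℝ) := by
    intro i j k
    simp only [v952, vInt952, Int.cast_ite, Int.cast_one, Int.cast_zero]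
  rw [c952, cInt952, hv, hv, Int.cast_sub]

theorem c952_ne_zero (i j k : Fin 9) : c952 i j k ≠ 0 ↔ cInt952 i j k ≠ 0 := by
  rw [c952_eq_cast, Int.cast_ne_zero]

set_option maxRecDepth 100000 in
theorem isNiceNilpotent_c952 : IsNiceNilpotent c952 where
  skew i j k := by simp [c952]
  jacobi x y z := by
    simp only [bracket_c952]
    ext k
    fin_cases k <;> simp <;> ring
  nilpotent := by
    -- 952:355 is 3-step: brackets lie in `⟨e₅,…,e₉⟩`, double brackets in the centre `⟨e₈,e₉⟩`.
    refine ⟨3, fun v w => ?_⟩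
    simp only [List.ofFn_succ, List.ofFn_zero, List.foldr_cons, List.foldr_nil, bracket_c952]
    ext k
    fin_cases k <;> simp
  nice_k i j k k' := by
    rw [c952_ne_zero, c952_ne_zero]
    revert i j k k'
    decide +kernel
  nice_j i j j' k := by
    rw [c952_ne_zero, c952_ne_zero]
    revert i j j' k
    decide +kernel

theorem isDiagramInvolution_sigma952 : IsDiagramInvolution c952 sigma952 := by
  refine ⟨by decide, fun i j k => ?_⟩
  rw [c952_ne_zero, c952_ne_zero]
  revert i j k
  decide +kernel

theorem not_einstein_sigmaDiag952 (gv : Fin 9 → ℝ) (h0 : ∀ i, gv i ≠ 0)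
    (hg : ∀ i, gv (sigma952 i) = gv i) : ¬ EinsteinE c952 (sigmaDiag sigma952 gv) := by
  intro hE
  have key : ∀ h, Ric c952 (sigmaDiag sigma952 gv) h h = 1/2 := by
    intro h
    rw [show Ric c952 (sigmaDiag sigma952 gv) = _ from hE]
    simp
  have g2 : gv 2 = gv 0 := hg 0
  have g3 : gv 3 = gv 1 := hg 1
  have g5 : gv 5 = gv 4 := hg 4
  have e1 := key 1
  have e4 := key 4
  have e6 := key 6
  have e7 := key 7
  rw [ric_sigmaDiag_apply c952 sigma952 isDiagramInvolution_sigma952.1 gv h0 hg]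
    at e1 e4 e6 e7
  simp [c952, v952, sigma952, Fin.sum_univ_succ, g2, g3, g5] at e1 e4 e6 e7
  -- With indices shifted by one: `g₇ / g₂² = 3` and `g₇ / g₁² = -4`.
  have hr : (gv 1)⁻¹ * (gv 1)⁻¹ * gv 6 = 3 := by
    linear_combination 2 * e1 + 2 * e4 + 2 * e7
  have hq : (gv 0)⁻¹ * (gv 0)⁻¹ * gv 6 = -4 := by
    linear_combination -2 * e6 - hr
  have hsq := mul_self_nonneg ((gv 0)⁻¹ * (gv 1)⁻¹ * gv 6)
  have hprod : ((gv 0)⁻¹ * (gv 1)⁻¹ * gv 6) * ((gv 0)⁻¹ * (gv 1)⁻¹ * gv 6) = -12 := by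
    linear_combination ((gv 0)⁻¹ * (gv 0)⁻¹ * gv 6) * hr + 3 * hq
  linarith

theorem einstein_diagonal952 (t : ℝ) (ht : t ≠ 0) :
    EinsteinE c952 (Matrix.diagonal (gv952 t)) := by
  have h0 : ∀ i, gv952 t i ≠ 0 := by
    intro i
    fin_cases i <;> simp [gv952, ht]
  have hσ : IsDiagramInvolution c952 1 := ⟨fun _ => rfl, fun _ _ _ h => h⟩
  rw [diagonal_eq_sigmaDiag]
  unfold EinsteinE
  ext h k
  by_cases hk : h = k
  · subst hk
    rw [ric_sigmaDiag_apply c952 1 hσ.1 _ h0 (fun _ => rfl)]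
    fin_cases h <;> simp [c952, v952, Fin.sum_univ_succ, gv952] <;> field_simp <;> norm_num
  · rw [ric_sigmaDiag_offDiag c952 isNiceNilpotent_c952 1 hσ _ h0 (fun _ => rfl) h k hk]
    simp [hk]

/-- On the Lie algebra `952:355` the permutation `σ = (1 3)(2 4)(5 6)(8 9)` is a diagram
involution but there is no σ-diagonal metric satisfying (E) `ric = ½ id`, even though for
every `g₂ = t ≠ 0` the diagonal metric `(4/21, t, 4/21, −64/(1323 t), −8t/7,
512/(9261 t), 64/441, 32t/21, −2048/(27783 t))` satisfies (E). -/
theorem no_sigma_diagonal_einstein_952_355 :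
    IsNiceNilpotent c952 ∧
    IsDiagramInvolution c952 sigma952 ∧
    (¬ ∃ gv : Fin 9 → ℝ, (∀ i, gv i ≠ 0) ∧ (∀ i, gv (sigma952 i) = gv i) ∧
        EinsteinE c952 (sigmaDiag sigma952 gv)) ∧
    (∀ t : ℝ, t ≠ 0 → EinsteinE c952 (Matrix.diagonal (gv952 t))) := by
  exact ⟨isNiceNilpotent_c952, isDiagramInvolution_sigma952,
    fun ⟨gv, h0, hg, hE⟩ => not_einstein_sigmaDiag952 gv h0 hg hE, einstein_diagonal952⟩
end
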